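/- Assume the Continuum Hypothesis. If X is a productively Lindelöf topological space with weight w(X) ≤ 𝔠, then X is powerfully Lindelöf. -/

import Mathlib

open Set Cardinal Topology

universe u v

/-- A space is quasi-Lindelöf if every open cover has a countable subcover
(no separation axioms assumed). -/
def QuasiLindelofSp (X : Type u) [TopologicalSpace X] : Prop :=
  ∀ 𝒰 : Set (Set X), (∀ U ∈ 𝒰, IsOpen U) → ⋃₀ 𝒰 = Set.univ →
    ∃ 𝒱 ⊆ 𝒰, 𝒱.Countable ∧ ⋃₀ 𝒱 = Set.univ

/-- Lindelöf in the sense of Engelking: regular (T3, including T1) and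
every open cover has a countable subcover. -/
def EngLindelofSp (X : Type u) [TopologicalSpace X] : Prop :=
  RegularSpace X ∧ T1Space X ∧ QuasiLindelofSp X

/-- X is productively Lindelöf if X × Y is Lindelöf for every Lindelöf space Y. -/
def ProductivelyLindelofSp (X : Type u) [TopologicalSpace X] : Prop :=
  ∀ (Y : Type u) [TopologicalSpace Y], EngLindelofSp Y → EngLindelofSp (X × Y)

/-- X is productively quasi-Lindelöf if X × Y is quasi-Lindelöf for every Lindelöf space Y. -/
def ProductivelyQuasiLindelofSp (X : Type u) [TopologicalSpace X] : Prop :=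
  ∀ (Y : Type u) [TopologicalSpace Y], EngLindelofSp Y → QuasiLindelofSp (X × Y)

/-- X is powerfully Lindelöf if X^ω is Lindelöf. -/
def PowerfullyLindelofSp (X : Type u) [TopologicalSpace X] : Prop :=
  EngLindelofSp (ℕ → X)

/-- X is powerfully quasi-Lindelöf if X^ω is quasi-Lindelöf. -/
def PowerfullyQuasiLindelofSp (X : Type u) [TopologicalSpace X] : Prop :=
  QuasiLindelofSp (ℕ → X)

/-- Tightness of X is at most κ. -/
def TightnessLE (X : Type u) [TopologicalSpace X] (κ : Cardinal.{u}) : Prop :=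
  ∀ (A : Set X) (x : X), x ∈ closure A → ∃ B ⊆ A, #B ≤ κ ∧ x ∈ closure B

/-- X has countable tightness. -/
def CountableTightness (X : Type u) [TopologicalSpace X] : Prop :=
  ∀ (A : Set X) (x : X), x ∈ closure A → ∃ B ⊆ A, B.Countable ∧ x ∈ closure B

/-- The Lindelöf number of X is at most κ: every open cover has a subcover of size ≤ κ. -/
def LindelofNumberLE (X : Type u) [TopologicalSpace X] (κ : Cardinal.{u}) : Prop :=
  ∀ 𝒰 : Set (Set X), (∀ U ∈ 𝒰, IsOpen U) → ⋃₀ 𝒰 = Set.univ →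
    ∃ 𝒱 ⊆ 𝒰, #𝒱 ≤ κ ∧ ⋃₀ 𝒱 = Set.univ

/-- The weight of X is at most κ: there is a base of size ≤ κ. -/
def WeightLE (X : Type u) [TopologicalSpace X] (κ : Cardinal.{u}) : Prop :=
  ∃ B : Set (Set X), TopologicalSpace.IsTopologicalBasis B ∧ #B ≤ κ

/-- N is a network for X. -/
def IsNetwork (X : Type u) [TopologicalSpace X] (N : Set (Set X)) : Prop :=
  ∀ (x : X) (U : Set X), IsOpen U → x ∈ U → ∃ n ∈ N, x ∈ n ∧ n ⊆ U

/-- X is linearly Lindelöf: regular (incl. T1) and every open cover linearly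
ordered by inclusion has a countable subcover. -/
def LinearlyLindelofSp (X : Type u) [TopologicalSpace X] : Prop :=
  RegularSpace X ∧ T1Space X ∧
    ∀ 𝒰 : Set (Set X), (∀ U ∈ 𝒰, IsOpen U) → IsChain (· ⊆ ·) 𝒰 → ⋃₀ 𝒰 = Set.univ →
      ∃ 𝒱 ⊆ 𝒰, 𝒱.Countable ∧ ⋃₀ 𝒱 = Set.univ

/-- U ⊆ X^ω is a basic open set: a product of open sets, all but finitely many of
which equal X. -/
def IsBasicOpen (X : Type u) [TopologicalSpace X] (U : Set (ℕ → X)) : Prop :=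
  ∃ V : ℕ → Set X, (∀ i, IsOpen (V i)) ∧ {i | V i ≠ Set.univ}.Finite ∧
    U = Set.pi Set.univ V

/-- A family of subsets of Z is point-κ if every point belongs to at most κ members. -/
def PointLE {Z : Type u} (𝒲 : Set (Set Z)) (κ : Cardinal.{u}) : Prop :=
  ∀ z : Z, #({W ∈ 𝒲 | z ∈ W}) ≤ κ

/-- A non-empty space is zero-dimensional if it is T1 and has a base of clopen sets. -/
def ZeroDimensionalSp (Y : Type u) [TopologicalSpace Y] : Prop :=
  Nonempty Y ∧ T1Space Y ∧
    ∃ B : Set (Set Y), TopologicalSpace.IsTopologicalBasis B ∧ ∀ b ∈ B, IsClopen b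


theorem quasi_iff (X : Type u) [TopologicalSpace X] : QuasiLindelofSp X ↔ LindelofSpace X := by
  constructor
  · intro h
    refine ⟨isLindelof_of_countable_subcover ?_⟩
    intro ι U hU hc
    obtain ⟨V, hV, hVc, hVu⟩ := h (range U) (by rintro _ ⟨i, rfl⟩; exact hU i)
      (by rw [sUnion_range]; exact univ_subset_iff.1 hc)
    have : ∀ v : V, ∃ i, U i = v := fun v => hV v.2
    choose f hf using this
    have := hVc.to_subtype
    refine ⟨range f, countable_range f, ?_⟩
    intro x _
    have hx : x ∈ ⋃₀ V := hVu ▸ mem_univ x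
    obtain ⟨v, hv, hxv⟩ := hx
    refine mem_biUnion (mem_range_self ⟨v, hv⟩) ?_
    rw [hf]; exact hxv
  · intro h 𝒰 hU hc
    obtain ⟨r, hr, hr2⟩ := (isLindelof_univ (X := X)).elim_countable_subcover (fun i : 𝒰 => i.1)
      (fun i => hU i i.2) (by rw [← sUnion_eq_iUnion, hc])
    refine ⟨Subtype.val '' r, by rintro _ ⟨i, _, rfl⟩; exact i.2, hr.image _, ?_⟩
    rw [sUnion_image]
    exact univ_subset_iff.1 hr2

open Classical in
theorem mich {X : Type u} [TopologicalSpace X] (hX : ProductivelyLindelofSp X) {B : Type u}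
    [TopologicalSpace B] [T3Space B] (i : X → B) (hi : Continuous i) (Y0 A : Set B)
    (hA : A ⊆ range i) (hY : Disjoint Y0 (range i))
    (hL : ∀ V : B → Set B, (∀ y ∈ Y0, IsOpen (V y) ∧ y ∈ V y) →
      ∃ S ⊆ Y0, S.Countable ∧ Y0 ⊆ ⋃ y ∈ S, V y ∧ (A \ ⋃ y ∈ S, V y).Countable) :
    A.Countable := by
  let φ : B → B × (A → Bool) := fun b => (b, fun a => decide (b = a))
  have hYA : ∀ y ∈ Y0, y ∉ A := fun y hy hyA => disjoint_left.1 hY hy (hA hyA)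
  let E : Set (B × (A → Bool)) := φ '' (Y0 ∪ A)
  have hE : IsLindelof E := by
    refine isLindelof_of_countable_subcover ?_
    intro ι O hO hc
    have h1 : ∀ y, ∃ j : Option ι, y ∈ Y0 ∪ A → ∃ k, j = some k ∧ φ y ∈ O k := by
      intro y
      by_cases hy : y ∈ Y0 ∪ A
      · obtain ⟨k, hk⟩ := mem_iUnion.1 (hc (mem_image_of_mem φ hy))
        exact ⟨some k, fun _ => ⟨k, rfl, hk⟩⟩
      · exact ⟨none, fun h => absurd h hy⟩
    choose j hj using h1
    have h2 : ∀ y, ∃ (V : Set B) (F : Set B), y ∈ Y0 → IsOpen V ∧ y ∈ V ∧ F ⊆ A ∧ F.Countable ∧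
        ∀ k, j y = some k → ∀ z ∈ V, z ∉ F → φ z ∈ O k := by
      intro y
      by_cases hy : y ∈ Y0
      swap
      · exact ⟨∅, ∅, fun h => absurd h hy⟩
      obtain ⟨k, hk, hyk⟩ := hj y (Or.inl hy)
      have hn : O k ∈ 𝓝 (φ y) := (hO k).mem_nhds hyk
      obtain ⟨V, hV, hyV, W, hW, hyW, hVW⟩ : ∃ V : Set B, IsOpen V ∧ y ∈ V ∧ ∃ W : Set (A → Bool),
          IsOpen W ∧ (fun a : A => decide (y = a)) ∈ W ∧ V ×ˢ W ⊆ O k := by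
        obtain ⟨V, W, hV, hW, h1, h2, h3⟩ := isOpen_prod_iff.1 (hO k) _ _ hyk
        exact ⟨V, hV, h1, W, hW, h2, h3⟩
      obtain ⟨s, u, hu, hus⟩ := isOpen_pi_iff.1 hW _ hyW
      refine ⟨V, Subtype.val '' (s : Set A), fun _ => ⟨hV, hyV, ?_, ?_, ?_⟩⟩
      · rintro _ ⟨a, _, rfl⟩; exact a.2
      · exact (s.finite_toSet.image _).countable
      · intro k' hk' z hz hzF
        obtain rfl : k = k' := by rw [hk] at hk'; exact Option.some.inj hk'
        apply hVW
        refine ⟨hz, hus ?_⟩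
        intro a ha
        have e1 : decide (z = a.1) = false := by
          simp only [decide_eq_false_iff_not]
          rintro rfl
          exact hzF ⟨a, ha, rfl⟩
        have e2 : decide (y = a.1) = false := by
          simp only [decide_eq_false_iff_not]
          rintro rfl
          exact hYA _ hy a.2
        have := (hu a ha).2
        simp only [φ]
        rw [e1]; rw [e2] at this; exact this
    choose V F hVF using h2
    obtain ⟨S, hSY, hSc, hS1, hS2⟩ := hL V (fun y hy => ⟨(hVF y hy).1, (hVF y hy).2.1⟩)
    let T : Set B := S ∪ ((A \ ⋃ y ∈ S, V y) ∪ ⋃ y ∈ S, F y)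
    have hT : T.Countable :=
      hSc.union (hS2.union (hSc.biUnion fun y hy => (hVF y (hSY hy)).2.2.2.1))
    refine ⟨{k | ∃ y ∈ T, j y = some k}, ?_, ?_⟩
    · have : {k | ∃ y ∈ T, j y = some k} ⊆ some ⁻¹' (j '' T) := by
        rintro k ⟨y, hy, hk⟩; exact ⟨y, hy, hk⟩
      exact ((hT.image j).preimage (Option.some_injective _)).mono this
    · rintro _ ⟨y, hy, rfl⟩
      by_cases hyT : y ∈ T
      · obtain ⟨k, hk, hyk⟩ := hj y hy
        exact mem_biUnion (show k ∈ {k | ∃ y ∈ T, j y = some k} from ⟨y, hyT, hk⟩) hyk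
      · have hyV : y ∈ ⋃ y ∈ S, V y := by
          rcases hy with hy | hy
          · exact hS1 hy
          · by_contra hcon
            exact hyT (Or.inr (Or.inl ⟨hy, hcon⟩))
        simp only [mem_iUnion] at hyV
        obtain ⟨s, hs, hys⟩ := hyV
        obtain ⟨k, hk, -⟩ := hj s (Or.inl (hSY hs))
        refine mem_biUnion (show k ∈ {k | ∃ y ∈ T, j y = some k} from ⟨s, Or.inl hs, hk⟩) ?_
        refine (hVF s (hSY hs)).2.2.2.2 k hk y hys ?_
        intro hF
        exact hyT (Or.inr (Or.inr (mem_biUnion hs hF)))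
  have hEL : EngLindelofSp E := ⟨inferInstance, inferInstance,
    (quasi_iff _).2 (isLindelof_iff_lindelofSpace.1 hE)⟩
  have hP := (quasi_iff _).1 (hX E hEL).2.2
  let G : Option A → Set (X × E) := fun o => match o with
    | none => {p | i p.1 ≠ p.2.1.1}
    | some a => {p | p.2.1.2 a = true}
  have hG : ∀ o, IsOpen (G o) := by
    rintro (_ | a)
    · exact isOpen_ne_fun (by fun_prop) (by fun_prop)
    · have hcont : Continuous (fun p : X × E => p.2.1.2 a) := by fun_prop
      exact (isOpen_discrete {true}).preimage hcont
  obtain ⟨r, hr, hr2⟩ := hP.isLindelof_univ.elim_countable_subcover G hG (by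
    rintro ⟨x, ⟨_, y, hy, rfl⟩⟩ _
    by_cases hxy : i x = y
    · have hyA : y ∈ A := by
        rcases hy with hy | hy
        · exact absurd ⟨x, hxy⟩ (disjoint_left.1 hY hy)
        · exact hy
      refine mem_iUnion.2 ⟨some ⟨y, hyA⟩, ?_⟩
      simp [G, φ]
    · exact mem_iUnion.2 ⟨none, hxy⟩)
  have : A ⊆ Subtype.val '' (some ⁻¹' r) := by
    intro a ha
    obtain ⟨x, hx⟩ := hA ha
    have := hr2 (mem_univ (x, (⟨φ a, a, Or.inr ha, rfl⟩ : E)))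
    simp only [mem_iUnion] at this
    obtain ⟨o, ho, hoG⟩ := this
    rcases o with _ | a'
    · exact absurd hx hoG
    · refine ⟨a', ho, ?_⟩
      simp only [G, φ, mem_ofPred_eq, decide_eq_true_eq] at hoG
      exact hoG.symm
  exact ((hr.preimage (Option.some_injective _)).image _).mono this

theorem michS {Ω : Type u} [LinearOrder Ω] (hc : ∀ a : Ω, (Iio a).Countable)
    (hb : ∀ S : Set Ω, S.Countable → ∃ b, ∀ s ∈ S, s < b)
    {X : Type u} [TopologicalSpace X] (hX : ProductivelyLindelofSp X) {B : Type u}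
    [TopologicalSpace B] [T3Space B] (i : X → B) (hi : Continuous i) (Y0 : Set B)
    (hY : Disjoint Y0 (range i)) (Z : Ω → Set B) (hZ : range i ⊆ ⋃ β, Z β)
    (hL : ∀ V : B → Set B, (∀ y ∈ Y0, IsOpen (V y) ∧ y ∈ V y) →
      ∃ S ⊆ Y0, S.Countable ∧ ∃ T : Set Ω, T.Countable ∧ Y0 ⊆ ⋃ y ∈ S, V y ∧
        range i ⊆ (⋃ y ∈ S, V y) ∪ ⋃ β ∈ T, Z β) :
    ∃ T : Set Ω, T.Countable ∧ range i ⊆ ⋃ β ∈ T, Z β := by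
  by_contra! hcon
  have h1 : ∀ α, ∃ x ∈ range i, x ∉ ⋃ β ∈ Iio α, Z β := fun α => not_subset.1 (hcon _ (hc α))
  choose x hx hxZ using h1
  have hAZ : ∀ β, (range x ∩ Z β).Countable := by
    intro β
    have : range x ∩ Z β ⊆ x '' (insert β (Iio β)) := by
      rintro _ ⟨⟨α, rfl⟩, hα⟩
      refine ⟨α, ?_, rfl⟩
      by_contra h
      simp only [mem_insert_iff, mem_Iio, not_or, not_lt] at h
      exact hxZ α (mem_biUnion (lt_of_le_of_ne h.2 (Ne.symm h.1)) hα)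
    exact (((hc β).insert β).image x).mono this
  have hA : (range x).Countable := by
    refine mich hX i hi Y0 (range x) (by rintro _ ⟨α, rfl⟩; exact hx α) hY ?_
    intro V hV
    obtain ⟨S, hS, hSc, T, hT, h1, h2⟩ := hL V hV
    refine ⟨S, hS, hSc, h1, ?_⟩
    have : (range x \ ⋃ y ∈ S, V y) ⊆ ⋃ β ∈ T, (range x ∩ Z β) := by
      rintro _ ⟨⟨α, rfl⟩, hα⟩
      rcases h2 (hx α) with h | h
      · exact absurd h hα
      · simp only [mem_iUnion] at h ⊢
        obtain ⟨β, hβ, h⟩ := h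
        exact ⟨β, hβ, ⟨α, rfl⟩, h⟩
    exact (hT.biUnion fun β _ => hAZ β).mono this
  have h2 : ∀ a : range x, ∃ β, a.1 ∈ Z β := by
    rintro ⟨_, α, rfl⟩
    exact mem_iUnion.1 (hZ (hx α))
  choose f hf using h2
  have := hA.to_subtype
  obtain ⟨b, hb⟩ := hb (range f) (countable_range f)
  exact hxZ b (mem_biUnion (hb _ ⟨⟨x b, b, rfl⟩, rfl⟩) (hf ⟨x b, b, rfl⟩))

theorem card_closed (M : Type u) [TopologicalSpace M] [SecondCountableTopology M] :
    #{C : Set M // IsClosed C} ≤ Cardinal.continuum := by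
  let b := TopologicalSpace.countableBasis M
  have hb := TopologicalSpace.isBasis_countableBasis M
  let f : {C : Set M // IsClosed C} → Set b := fun C => {v | Disjoint v.1 C.1}
  have hf : Function.Injective f := by
    have key : ∀ C D : {C : Set M // IsClosed C}, f C = f D → C.1 ⊆ D.1 := by
      intro C D h x hx
      by_contra hxD
      obtain ⟨v, hv, hxv, hvD⟩ := hb.exists_subset_of_mem_open hxD D.2.isOpen_compl
      have : (⟨v, hv⟩ : b) ∈ f D := disjoint_left.2 fun y hy hyD => hvD hy hyD
      rw [← h] at this
      exact disjoint_left.1 this hxv hx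
    intro C D h
    exact Subtype.ext (Subset.antisymm (key C D h) (key D C h.symm))
  calc #{C : Set M // IsClosed C} ≤ #(Set b) := mk_le_of_injective hf
    _ = 2 ^ #b := mk_set
    _ ≤ 2 ^ ℵ₀ := 
      power_le_power_left two_ne_zero (TopologicalSpace.countable_countableBasis M).le_aleph0
    _ = _ := two_power_aleph0

theorem sigma_cpt {Ω : Type u} [LinearOrder Ω] (hc : ∀ a : Ω, (Iio a).Countable)
    (hb : ∀ S : Set Ω, S.Countable → ∃ b, ∀ s ∈ S, s < b)
    (hs : ∀ T : Type u, Nonempty T → #T ≤ Cardinal.continuum → ∃ f : Ω → T, f.Surjective)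
    {X : Type u} [TopologicalSpace X] (hX : ProductivelyLindelofSp X) {M : Type u}
    [TopologicalSpace M] [T3Space M] [SecondCountableTopology M]
    (i : X → M) (hi : Continuous i) :
    ∃ 𝒞 : Set (Set M), 𝒞.Countable ∧ (∀ C ∈ 𝒞, IsClosed C) ∧ range i = ⋃₀ 𝒞 := by
  let 𝒦 := {C : {C : Set M // IsClosed C} // C.1 ⊆ range i}
  obtain ⟨f, hf⟩ := hs 𝒦 ⟨⟨⟨∅, isClosed_empty⟩, empty_subset _⟩⟩
    ((mk_subtype_le _).trans (card_closed M))
  let Z : Ω → Set M := fun β => (f β).1.1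
  have hZ : ∀ C : Set M, IsClosed C → C ⊆ range i → ∃ β, Z β = C := by
    intro C hC hCi
    obtain ⟨β, hβ⟩ := hf ⟨⟨C, hC⟩, hCi⟩
    exact ⟨β, by simp [Z, hβ]⟩
  obtain ⟨T, hT, hTi⟩ := michS hc hb hX i hi (range i)ᶜ disjoint_compl_left Z (by
    intro x hx
    obtain ⟨β, hβ⟩ := hZ {x} isClosed_singleton (singleton_subset_iff.2 hx)
    exact mem_iUnion.2 ⟨β, by rw [hβ]; rfl⟩) (by
    intro V hV
    obtain ⟨r, hr1, hr2, hr3⟩ := (HereditarilyLindelofSpace.isLindelof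
      (range i)ᶜ).elim_countable_subcover_image (b := (range i)ᶜ) (c := V) (fun y hy => (hV y hy).1)
      (fun y hy => mem_biUnion hy (hV y hy).2)
    obtain ⟨β, hβ⟩ := hZ (⋃ y ∈ r, V y)ᶜ
      (isOpen_biUnion fun y hy => (hV y (hr1 hy)).1).isClosed_compl
      (by rw [compl_subset_comm]; exact hr3)
    refine ⟨r, hr1, hr2, {β}, countable_singleton β, hr3, ?_⟩
    intro x _
    simp only [mem_singleton_iff, iUnion_iUnion_eq_left, hβ]
    exact em _)
  refine ⟨Z '' T, hT.image Z, ?_, ?_⟩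
  · rintro _ ⟨β, _, rfl⟩; exact (f β).1.2
  · rw [sUnion_image]
    exact Subset.antisymm hTi (iUnion₂_subset fun β _ => (f β).2)

theorem lind_preimage {B M : Type u} [TopologicalSpace B] [CompactSpace B] [TopologicalSpace M]
    [T2Space M] [SecondCountableTopology M] (p : B → M) (hp : Continuous p) (T : Set M) :
    IsLindelof (p ⁻¹' T) := by
  refine isLindelof_of_countable_subcover ?_
  intro ι U hU hc
  have h1 : ∀ t, ∃ s : Finset ι, t ∈ T → p ⁻¹' {t} ⊆ ⋃ i ∈ s, U i := by
    intro t
    by_cases ht : t ∈ T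
    · obtain ⟨s, hs⟩ := ((isClosed_singleton (x := t)).preimage hp).isCompact.elim_finite_subcover
        U hU ((preimage_mono (singleton_subset_iff.2 ht)).trans hc)
      exact ⟨s, fun _ => hs⟩
    · exact ⟨∅, fun h => absurd h ht⟩
  choose s hs using h1
  let N : M → Set M := fun t => (p '' (⋃ i ∈ s t, U i)ᶜ)ᶜ
  have hN : ∀ t, IsOpen (N t) := fun t =>
    ((isOpen_biUnion fun i _ => hU i).isClosed_compl.isCompact.image hp).isClosed.isOpen_compl
  have hN2 : ∀ t ∈ T, t ∈ N t := by
    rintro t ht ⟨b, hb, rfl⟩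
    exact hb (hs _ ht rfl)
  obtain ⟨r, hr1, hr2, hr3⟩ := (HereditarilyLindelofSpace.isLindelof
      T).elim_countable_subcover_image (b := T) (c := N) (fun y _ => hN y)
      (fun y hy => mem_biUnion hy (hN2 y hy))
  refine ⟨⋃ t ∈ r, (s t : Set ι), hr2.biUnion fun t _ => (s t).countable_toSet, ?_⟩
  intro b hb
  have := hr3 hb
  simp only [mem_iUnion] at this
  obtain ⟨t, ht, hbt⟩ := this
  have : b ∈ ⋃ i ∈ s t, U i := by
    by_contra h
    exact hbt ⟨b, h, rfl⟩
  simp only [mem_iUnion] at this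
  obtain ⟨i, hi, hbi⟩ := this
  exact mem_biUnion (mem_biUnion ht hi) hbi

theorem baireQ {M : Type u} [TopologicalSpace M] [T2Space M] (Q : Set M) (hQ : IsCompact Q)
    (hne : Q.Nonempty) (𝒟 : Set (Set M)) (hD : 𝒟.Countable) (hcl : ∀ D ∈ 𝒟, IsClosed D)
    (h : ∀ D ∈ 𝒟, ∀ O, IsOpen O → (O ∩ Q).Nonempty → ¬ O ∩ Q ⊆ D) :
    ∃ t ∈ Q, ∀ D ∈ 𝒟, t ∉ D := by
  by_contra! hcon
  have : CompactSpace Q := isCompact_iff_compactSpace.1 hQ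
  have : Nonempty Q := hne.to_subtype
  have := hD.to_subtype
  obtain ⟨D, hDi⟩ := nonempty_interior_of_iUnion_of_closed
    (f := fun D : 𝒟 => ((↑) : Q → M) ⁻¹' D.1)
    (fun D => (hcl D.1 D.2).preimage continuous_subtype_val) (by
      rw [eq_univ_iff_forall]
      rintro ⟨t, ht⟩
      obtain ⟨D, hD, htD⟩ := hcon t ht
      exact mem_iUnion.2 ⟨⟨D, hD⟩, htD⟩)
  obtain ⟨t, ht⟩ := hDi
  obtain ⟨O, hO, hOe⟩ := isOpen_induced_iff.1 (isOpen_interior (s := ((↑) : Q → M) ⁻¹' D.1))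
  refine h D.1 D.2 O hO ⟨t.1, ?_, t.2⟩ ?_
  · have : t ∈ ((↑) : Q → M) ⁻¹' O := hOe ▸ ht
    exact this
  · rintro y ⟨hyO, hyQ⟩
    have : (⟨y, hyQ⟩ : Q) ∈ ((↑) : Q → M) ⁻¹' O := hyO
    rw [hOe] at this
    exact (interior_subset this : (⟨y, hyQ⟩ : Q) ∈ ((↑) : Q → M) ⁻¹' D.1)

theorem fin_sat {Ω : Type u} (L U : Set (Ω → unitInterval)) (hL : IsCompact L) (hU : IsOpen U)
    (hLU : L ⊆ U) : ∃ s : Finset Ω, ∀ b ∈ L, ∀ b', (∀ j ∈ s, b' j = b j) → b' ∈ U := by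
  classical
  have h1 : ∀ b, ∃ (F : Finset Ω) (O : Set (Ω → unitInterval)), b ∈ L → IsOpen O ∧ b ∈ O ∧
      ∀ c ∈ O, ∀ c', (∀ j ∈ F, c' j = c j) → c' ∈ U := by
    intro b
    by_cases hb : b ∈ L
    swap
    · exact ⟨∅, ∅, fun h => absurd h hb⟩
    obtain ⟨F, u, hu, hFu⟩ := isOpen_pi_iff.1 hU b (hLU hb)
    refine ⟨F, (F : Set Ω).pi u, fun _ => ⟨isOpen_set_pi F.finite_toSet fun j hj => (hu j hj).1,
      fun j hj => (hu j hj).2, ?_⟩⟩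
    intro c hc c' hcc
    apply hFu
    intro j hj
    rw [hcc j hj]
    exact hc j hj
  choose F O hFO using h1
  obtain ⟨t, ht1, ht2⟩ := hL.elim_nhds_subcover O
    (fun b hb => (hFO b hb).1.mem_nhds (hFO b hb).2.1)
  refine ⟨t.biUnion F, ?_⟩
  intro b hb b' hbb
  have := ht2 hb
  simp only [mem_iUnion] at this
  obtain ⟨x, hx, hbx⟩ := this
  exact (hFO x (ht1 x hx)).2.2 b hbx b' fun j hj => hbb j (Finset.mem_biUnion.2 ⟨x, hx, hj⟩)

def rp {Ω : Type u} [LinearOrder Ω] (α : Ω) (b : Ω → unitInterval) : Iio α → unitInterval :=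
  fun j => b j.1

theorem rp_cont {Ω : Type u} [LinearOrder Ω] (α : Ω) : Continuous (rp α) :=
  continuous_pi fun j => continuous_apply j.1

theorem rp_le {Ω : Type u} [LinearOrder Ω] {α α' : Ω} (h : α ≤ α') {b c : Ω → unitInterval}
    (hbc : rp α' b = rp α' c) : rp α b = rp α c := by
  funext j
  exact congrFun hbc ⟨j.1, lt_of_lt_of_le j.2 h⟩

/-- closing off argument -/
theorem close_off {Ω : Type u} [LinearOrder Ω] [WellFoundedLT Ω]
    (hc : ∀ a : Ω, (Iio a).Countable)
    (hb : ∀ S : Set Ω, S.Countable → ∃ b, ∀ s ∈ S, s < b)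
    (W : Ω → Set (Ω → unitInterval)) (hW : Monotone W) (K : Set (Ω → unitInterval))
    (hK : ∀ O, IsOpen O → (O ∩ K).Nonempty → ∃ b ∈ O ∩ K, ∃ α, b ∈ W α) :
    ∃ γ : Ω, ∀ O : Set (Iio γ → unitInterval), IsOpen O → (rp γ ⁻¹' O ∩ K).Nonempty →
      ∃ b ∈ rp γ ⁻¹' O ∩ K, b ∈ W γ := by
  have hcnt : ∀ α : Ω, Countable (Iio α) := fun α => (hc α).to_subtype
  have h1 : ∀ α : Ω, ∃ α' > α, ∀ v ∈ TopologicalSpace.countableBasis (Iio α → unitInterval),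
      (rp α ⁻¹' v ∩ K).Nonempty → ∃ b ∈ rp α ⁻¹' v ∩ K, b ∈ W α' := by
    intro α
    have h2 : ∀ v : TopologicalSpace.countableBasis (Iio α → unitInterval), ∃ α',
        (rp α ⁻¹' v.1 ∩ K).Nonempty → ∃ b ∈ rp α ⁻¹' v.1 ∩ K, b ∈ W α' := by
      intro v
      by_cases hv : (rp α ⁻¹' v.1 ∩ K).Nonempty
      · obtain ⟨b, hb, α', hα⟩ := hK _
          ((TopologicalSpace.isOpen_of_mem_countableBasis v.2).preimage (rp_cont α)) hv
        exact ⟨α', fun _ => ⟨b, hb, hα⟩⟩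
      · exact ⟨α, fun h => absurd h hv⟩
    choose f hf using h2
    obtain ⟨α', hα'⟩ := hb (insert α (range f)) ((countable_range f).insert α)
    refine ⟨α', hα' α (mem_insert _ _), ?_⟩
    intro v hv hne
    obtain ⟨b, hb, hbW⟩ := hf ⟨v, hv⟩ hne
    exact ⟨b, hb, hW (hα' _ (mem_insert_of_mem _ ⟨⟨v, hv⟩, rfl⟩)).le hbW⟩
  choose nx hnx1 hnx2 using h1
  obtain ⟨a0, -⟩ := hb ∅ countable_empty
  let g : ℕ → Ω := fun n => nx^[n] a0
  have hgs : ∀ n, g (n + 1) = nx (g n) := fun n => Function.iterate_succ_apply' nx n a0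
  have hgm : Monotone g := monotone_nat_of_le_succ fun n => by rw [hgs]; exact (hnx1 _).le
  obtain ⟨b1, hb1⟩ := hb (range g) (countable_range g)
  obtain ⟨γ, hγ1, hγ2⟩ := WellFounded.has_min (r := ((· < ·) : Ω → Ω → Prop)) wellFounded_lt
    {b | ∀ n, g n ≤ b} ⟨b1, fun n => (hb1 _ ⟨n, rfl⟩).le⟩
  have hγ3 : ∀ β < γ, ∃ n, β < g n := by
    intro β hβ
    by_contra! hcon
    exact hγ2 β hcon hβ
  refine ⟨γ, ?_⟩
  rintro O hO ⟨b0, hb0, hb0K⟩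
  obtain ⟨F, u, hu, hFu⟩ := isOpen_pi_iff.1 hO _ hb0
  obtain ⟨n, hn⟩ : ∃ n, ∀ j ∈ F, j.1 < g n := by
    choose m hm using fun j : Iio γ => hγ3 j.1 j.2
    refine ⟨F.sup m, fun j hj => (hm j).trans_le (hgm (Finset.le_sup hj))⟩
  let O' : Set (Iio (g n) → unitInterval) := ⋂ j : F, {t | t ⟨j.1.1, hn j.1 j.2⟩ ∈ u j.1}
  have hO' : IsOpen O' := isOpen_iInter_of_finite fun j =>
    (hu j.1 j.2).1.preimage (continuous_apply (⟨j.1.1, hn j.1 j.2⟩ : Iio (g n)))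
  obtain ⟨v, hv, hbv, hvO⟩ := (TopologicalSpace.isBasis_countableBasis
    (Iio (g n) → unitInterval)).exists_subset_of_mem_open (a := rp (g n) b0) (u := O')
    (mem_iInter.2 fun j => (hu j.1 j.2).2) hO'
  obtain ⟨b, ⟨hb2, hbK⟩, hbW⟩ := hnx2 (g n) v hv ⟨b0, hbv, hb0K⟩
  refine ⟨b, ⟨hFu ?_, hbK⟩, hW ?_ hbW⟩
  · intro j hj
    exact mem_iInter.1 (hvO hb2) ⟨j, hj⟩
  · rw [← hgs]; exact hγ1 _

theorem core {Ω : Type u} [LinearOrder Ω] [WellFoundedLT Ω]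
    (hc : ∀ a : Ω, (Iio a).Countable)
    (hb : ∀ S : Set Ω, S.Countable → ∃ b, ∀ s ∈ S, s < b)
    (hs : ∀ T : Type u, Nonempty T → #T ≤ Cardinal.continuum → ∃ f : Ω → T, f.Surjective)
    {X : Type u} [TopologicalSpace X] [LindelofSpace X] (hX : ProductivelyLindelofSp X)
    (e : X → (Ω → unitInterval)) (he : IsInducing e)
    (ev : Ω → Ω) (C : ∀ β, Set (Iio (ev β) → unitInterval)) (hC : ∀ β, IsClosed (C β))
    (Z : Ω → Set (Ω → unitInterval)) (hZ : ∀ β, Z β = rp (ev β) ⁻¹' C β)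
    (hK : ∀ K : Set X, IsCompact K → ∃ β, e '' K ⊆ Z β) :
    ∃ T : Set Ω, T.Countable ∧ range e ⊆ ⋃ β ∈ T, Z β := by
  have hcnt : ∀ α : Ω, Countable (Iio α) := fun α => (hc α).to_subtype
  have hZsat : ∀ β α, ev β ≤ α → ∀ b c, rp α b = rp α c → b ∈ Z β → c ∈ Z β := by
    intro β α h b c hbc hbZ
    rw [hZ, mem_preimage] at hbZ ⊢
    rwa [← rp_le h hbc]
  have hZcl : ∀ β, IsClosed (Z β) := fun β => by
    rw [hZ]; exact (hC β).preimage (rp_cont _)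
  let W : Ω → Set (Ω → unitInterval) := fun α => {b | ∀ x, rp α b ≠ rp α (e x)}
  have hWm : Monotone W := fun α α' h b hb x hx => hb x (rp_le h hx)
  have hWe : ∀ b, b ∉ range e → ∃ α, b ∈ W α := by
    intro b hbe
    have h1 : ∀ x, ∃ j, e x j ≠ b j := fun x => by
      by_contra! h
      exact hbe ⟨x, funext h⟩
    choose j hj using h1
    obtain ⟨t, ht, htu⟩ := LindelofSpace.elim_nhds_subcover (fun x => {y | e y (j x) ≠ b (j x)})
      (fun x => (isOpen_ne_fun ((continuous_apply (j x)).comp he.continuous)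
        continuous_const).mem_nhds (hj x))
    obtain ⟨α, hα⟩ := hb (j '' t) (ht.image j)
    refine ⟨α, fun y hy => ?_⟩
    have : y ∈ ⋃ x ∈ t, {y | e y (j x) ≠ b (j x)} := htu ▸ mem_univ y
    simp only [mem_iUnion] at this
    obtain ⟨x, hx, hxy⟩ := this
    exact hxy (congrFun hy ⟨j x, hα _ ⟨x, hx, rfl⟩⟩).symm
  let W' : Ω → Set (Ω → unitInterval) := fun α => {b | b ∈ W α ∧ ∀ β ≤ α, ev β ≤ α → b ∉ Z β}
  have hW'L : ∀ α, IsLindelof (W' α) := by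
    intro α
    have : W' α = rp α ⁻¹' (rp α '' W' α) := by
      refine Subset.antisymm (subset_preimage_image _ _) ?_
      rintro b ⟨c, ⟨hc1, hc2⟩, hcb⟩
      refine ⟨fun x hx => hc1 x (hcb.trans hx), fun β h1 h2 hbZ => hc2 β h1 h2 ?_⟩
      exact hZsat β α h2 b c hcb.symm hbZ
    rw [this]
    exact lind_preimage _ (rp_cont α) _
  have hpt : range e ⊆ ⋃ β, Z β := by
    rintro _ ⟨x, rfl⟩
    obtain ⟨β, hβ⟩ := hK {x} isCompact_singleton
    exact mem_iUnion.2 ⟨β, hβ ⟨x, rfl, rfl⟩⟩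
  refine michS hc hb hX e he.continuous (⋃ α, W' α) ?_ Z hpt ?_
  · rw [disjoint_left]
    rintro _ h ⟨x, rfl⟩
    obtain ⟨α, hα⟩ := mem_iUnion.1 h
    exact hα.1 x rfl
  intro V hV
  set Y0 := ⋃ α, W' α with hY0
  let small : Set (Ω → unitInterval) → Prop := fun L => ∃ S ⊆ Y0, S.Countable ∧
    ∃ T : Set Ω, T.Countable ∧ L ∩ Y0 ⊆ ⋃ y ∈ S, V y ∧ L ⊆ (⋃ y ∈ S, V y) ∪ ⋃ β ∈ T, Z β
  have hsm : ∀ ⦃s t⦄, s ⊆ t → small t → small s := by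
    rintro s t hst ⟨S, h1, h2, T, h3, h4, h5⟩
    exact ⟨S, h1, h2, T, h3, (inter_subset_inter_left _ hst).trans h4, hst.trans h5⟩
  have hsU : ∀ L : ℕ → Set (Ω → unitInterval), (∀ n, small (L n)) → small (⋃ n, L n) := by
    intro L hL
    choose S h1 h2 T h3 h4 h5 using hL
    refine ⟨⋃ n, S n, iUnion_subset h1, countable_iUnion h2, ⋃ n, T n, countable_iUnion h3, ?_, ?_⟩
    · rintro b ⟨hbL, hbY⟩
      obtain ⟨n, hn⟩ := mem_iUnion.1 hbL
      exact biUnion_subset_biUnion_left (subset_iUnion S n) (h4 n ⟨hn, hbY⟩)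
    · intro b hbL
      obtain ⟨n, hn⟩ := mem_iUnion.1 hbL
      rcases h5 n hn with h | h
      · exact Or.inl (biUnion_subset_biUnion_left (subset_iUnion S n) h)
      · exact Or.inr (biUnion_subset_biUnion_left (subset_iUnion T n) h)
  have hs0 : small ∅ := ⟨∅, empty_subset _, countable_empty, ∅, countable_empty, by simp, by simp⟩
  have hsu : ∀ ⦃s t⦄, small s → small t → small (s ∪ t) := by
    intro s t hs ht
    refine hsm ?_ (hsU (fun n => if n = 0 then s else t) (by intro n; split_ifs <;> assumption))
    rintro b (hb | hb)
    · exact mem_iUnion.2 ⟨0, by simpa using hb⟩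
    · exact mem_iUnion.2 ⟨1, by simpa using hb⟩
  have hsZ : ∀ δ, small (Z δ) := by
    intro δ
    obtain ⟨a, ha⟩ := hb {δ, ev δ} (by simp)
    have h1 : IsLindelof (⋃ α ∈ Iio a, W' α) := (hc a).isLindelof_biUnion fun α _ => hW'L α
    obtain ⟨r, hr1, hr2, hr3⟩ := h1.elim_countable_subcover_image (b := Y0) (c := V)
      (fun y hy => (hV y hy).1) (by
        intro b hb
        have : b ∈ Y0 := iUnion₂_subset (fun α _ => subset_iUnion W' α) hb
        exact mem_biUnion this (hV b this).2)
    refine ⟨r, hr1, hr2, {δ}, countable_singleton _, ?_, ?_⟩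
    · rintro b ⟨hbZ, hbY⟩
      apply hr3
      obtain ⟨α, hα⟩ := mem_iUnion.1 hbY
      refine mem_biUnion (show α ∈ Iio a from ?_) hα
      by_contra hcon
      rw [mem_Iio, not_lt] at hcon
      exact hα.2 δ ((ha δ (by simp)).le.trans hcon) ((ha (ev δ) (by simp)).le.trans hcon) hbZ
    · intro b hb
      right; simpa using hb
  let U : Set (Ω → unitInterval) := {x | ∃ N ∈ 𝓝 x, small N}
  have hUo : IsOpen U := by
    rw [isOpen_iff_mem_nhds]
    rintro x ⟨N, hN, hNs⟩
    filter_upwards [eventually_mem_nhds_iff.2 hN] with y hy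
    exact ⟨N, hy, hNs⟩
  have hUc : ∀ L, IsCompact L → L ⊆ U → small L := by
    intro L hL hLU
    refine hL.induction_on hs0 hsm hsu ?_
    intro x hx
    obtain ⟨N, hN, hNs⟩ := hLU hx
    exact ⟨N, mem_nhdsWithin_of_mem_nhds hN, hNs⟩
  have hUY : Y0 ⊆ U := by
    intro y hy
    refine ⟨V y, (hV y hy).1.mem_nhds (hV y hy).2, {y}, singleton_subset_iff.2 hy,
      countable_singleton _, ∅, countable_empty, ?_, ?_⟩
    · simp
    · simp
  by_cases hne : (Uᶜ).Nonempty
  swap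
  · have hU1 : U = Set.univ := by rwa [not_nonempty_iff_eq_empty, compl_empty_iff] at hne
    obtain ⟨S, h1, h2, T, h3, h4, h5⟩ := hUc Set.univ isCompact_univ (by rw [hU1])
    exact ⟨S, h1, h2, T, h3, by simpa using h4, (subset_univ _).trans h5⟩
  exfalso
  have hZnd : ∀ β O, IsOpen O → (O ∩ Uᶜ).Nonempty → ¬ O ∩ Uᶜ ⊆ Z β := by
    rintro β O hO ⟨x, hxO, hxU⟩ hsub
    apply hxU
    obtain ⟨N, hN, hNc, hNO⟩ := exists_mem_nhds_isClosed_subset (hO.mem_nhds hxO)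
    refine ⟨N, hN, ?_⟩
    have hG : IsGδ (Z β) := by
      let _ := TopologicalSpace.pseudoMetrizableSpacePseudoMetric (Iio (ev β) → unitInterval)
      rw [hZ]; exact (hC β).isGδ.preimage (rp_cont _)
    obtain ⟨G, hGo, hGe⟩ := isGδ_iff_eq_iInter_nat.1 hG
    have : N ⊆ Z β ∪ ⋃ n, N \ G n := by
      intro b hb
      by_cases hbZ : b ∈ Z β
      · exact Or.inl hbZ
      · right
        rw [hGe, mem_iInter, not_forall] at hbZ
        obtain ⟨n, hn⟩ := hbZ
        exact mem_iUnion.2 ⟨n, hb, hn⟩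
    refine hsm this (hsu (hsZ β) (hsU _ fun n => hUc _ (hNc.isCompact.diff (hGo n)) ?_))
    rintro b ⟨hbN, hbG⟩
    by_contra hbU
    have := hsub ⟨hNO hbN, hbU⟩
    rw [hGe] at this
    exact hbG (mem_iInter.1 this n)
  have hXnd : ∀ O, IsOpen O → (O ∩ Uᶜ).Nonempty → ∃ b ∈ O ∩ Uᶜ, ∃ α, b ∈ W α := by
    rintro O hO ⟨x, hxO, hxU⟩
    by_contra! hcon
    have hsub : O ∩ Uᶜ ⊆ range e := by
      intro b hb
      by_contra hbe
      obtain ⟨α, hα⟩ := hWe b hbe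
      exact hcon b hb α hα
    obtain ⟨N, hN, hNc, hNO⟩ := exists_mem_nhds_isClosed_subset (hO.mem_nhds hxO)
    have hNe : N ∩ Uᶜ ⊆ range e := (inter_subset_inter_left _ hNO).trans hsub
    obtain ⟨β, hβ⟩ := hK (e ⁻¹' (N ∩ Uᶜ)) ((he.isCompact_preimage_iff hNe).2
      (hNc.inter hUo.isClosed_compl).isCompact)
    rw [image_preimage_eq_of_subset hNe] at hβ
    exact hZnd β (interior N) isOpen_interior ⟨x, mem_interior_iff_mem_nhds.2 hN, hxU⟩
      ((inter_subset_inter_left _ interior_subset).trans hβ)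
  obtain ⟨γ, hγ⟩ := close_off hc hb W hWm Uᶜ hXnd
  obtain ⟨𝒞, h𝒞c, h𝒞cl, h𝒞e⟩ := sigma_cpt hc hb hs hX (rp γ ∘ e) ((rp_cont γ).comp he.continuous)
  obtain ⟨t, ⟨b, hbU, rfl⟩, ht⟩ := baireQ (rp γ '' Uᶜ)
    (hUo.isClosed_compl.isCompact.image (rp_cont γ)) (hne.image _)
    (𝒞 ∪ (fun β => rp γ '' Z β) '' {β | β ≤ γ ∧ ev β ≤ γ}) (by
      refine h𝒞c.union (Countable.image ?_ _)
      refine ((hc γ).insert γ).mono ?_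
      rintro β ⟨h, -⟩
      rcases h.eq_or_lt with h | h
      · exact Or.inl h
      · exact Or.inr h) (by
      rintro D (hD | ⟨β, hβ, rfl⟩)
      · exact h𝒞cl D hD
      · exact ((hZcl β).isCompact.image (rp_cont γ)).isClosed) (by
      rintro D hD O hO ⟨_, htO, b, hbU, rfl⟩ hsub
      rcases hD with hD | ⟨β, hβ, rfl⟩
      · obtain ⟨c, ⟨hcO, hcU⟩, hcW⟩ := hγ O hO ⟨b, htO, hbU⟩
        have h1 : rp γ c ∈ ⋃₀ 𝒞 := ⟨D, hD, hsub ⟨hcO, c, hcU, rfl⟩⟩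
        rw [← h𝒞e] at h1
        obtain ⟨x, hx⟩ := h1
        exact hcW x hx.symm
      · refine hZnd β (rp γ ⁻¹' O) (hO.preimage (rp_cont γ)) ⟨b, htO, hbU⟩ ?_
        rintro c ⟨hcO, hcU⟩
        obtain ⟨d, hd, hdc⟩ := hsub ⟨hcO, c, hcU, rfl⟩
        exact hZsat β γ hβ.2 d c hdc hd)
  apply hbU
  apply hUY
  refine mem_iUnion.2 ⟨γ, fun x hx => ?_, fun β h1 h2 hbZ => ?_⟩
  · have : rp γ b ∈ ⋃₀ 𝒞 := by rw [← h𝒞e]; exact ⟨x, hx.symm⟩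
    obtain ⟨D, hD, hbD⟩ := this
    exact ht D (Or.inl hD) hbD
  · exact ht _ (Or.inr ⟨β, ⟨h1, h2⟩, rfl⟩) ⟨b, hbZ, rfl⟩

def nb {X : Type u} [TopologicalSpace X] (K G : Set X) : Prop :=
  ∃ 𝒮 : Set (Set X), 𝒮.Countable ∧ (∀ U ∈ 𝒮, IsOpen U ∧ K ⊆ U) ∧ ⋂₀ 𝒮 ⊆ G

def AlsterSp (X : Type u) [TopologicalSpace X] : Prop :=
  ∀ 𝒢 : Set (Set X), (∀ K, IsCompact K → ∃ G ∈ 𝒢, nb K G) →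
    ∃ 𝒢' ⊆ 𝒢, 𝒢'.Countable ∧ ⋃₀ 𝒢' = Set.univ

theorem alster {Ω : Type u} [LinearOrder Ω] [WellFoundedLT Ω]
    (hc : ∀ a : Ω, (Iio a).Countable)
    (hb : ∀ S : Set Ω, S.Countable → ∃ b, ∀ s ∈ S, s < b)
    (hs : ∀ T : Type u, Nonempty T → #T ≤ Cardinal.continuum → ∃ f : Ω → T, f.Surjective)
    (hΩ : #Ω ≤ Cardinal.continuum)
    {X : Type u} [TopologicalSpace X] [LindelofSpace X] (hX : ProductivelyLindelofSp X)
    (e : X → (Ω → unitInterval)) (he : IsInducing e) : AlsterSp X := by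
  intro 𝒢 h𝒢
  have hcnt : ∀ α : Ω, Countable (Iio α) := fun α => (hc α).to_subtype
  let S := Σ α : Ω, {C : Set (Iio α → unitInterval) // IsClosed C}
  have hS : #S ≤ Cardinal.continuum := by
    rw [mk_sigma]
    calc Cardinal.sum (fun α : Ω => #{C : Set (Iio α → unitInterval) // IsClosed C})
        ≤ Cardinal.sum (fun _ : Ω => Cardinal.continuum.{u}) :=
          sum_le_sum _ _ fun α => card_closed _
      _ = #Ω * Cardinal.continuum := by simp
      _ ≤ Cardinal.continuum * Cardinal.continuum := by gcongr
      _ = Cardinal.continuum := continuum_mul_self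
  let T := {q : S // ∃ G ∈ 𝒢, e ⁻¹' (rp q.1 ⁻¹' q.2.1) ⊆ G}
  have key : ∀ K, IsCompact K → ∃ q : T, e '' K ⊆ rp q.1.1 ⁻¹' q.1.2.1 := by
    intro K hK
    obtain ⟨G, hG, 𝒮, h𝒮c, h𝒮, h𝒮G⟩ := h𝒢 K hK
    have h1 : ∀ U : 𝒮, ∃ s : Finset Ω, ∀ b ∈ e '' K, ∀ x, (∀ j ∈ s, e x j = b j) → x ∈ U.1 := by
      intro U
      obtain ⟨O, hO, hOU⟩ := he.isOpen_iff.1 (h𝒮 U U.2).1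
      obtain ⟨s, hs⟩ := fin_sat (e '' K) O (hK.image he.continuous) hO (by
        rintro _ ⟨x, hx, rfl⟩
        have : x ∈ e ⁻¹' O := by rw [hOU]; exact (h𝒮 U U.2).2 hx
        exact this)
      refine ⟨s, fun b hb x hx => ?_⟩
      rw [← hOU]
      exact hs b hb (e x) hx
    choose s hs using h1
    have := h𝒮c.to_subtype
    obtain ⟨α, hα⟩ := hb (⋃ U, (s U : Set Ω)) (countable_iUnion fun U => (s U).countable_toSet)
    refine ⟨⟨⟨α, rp α '' (e '' K), ((hK.image he.continuous).image (rp_cont α)).isClosed⟩,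
      G, hG, ?_⟩, subset_preimage_image _ _⟩
    rintro x ⟨b, hb, hbx⟩
    apply h𝒮G
    intro U hU
    refine hs ⟨U, hU⟩ b hb x fun j hj => ?_
    exact (congrFun hbx ⟨j, hα j (mem_iUnion.2 ⟨⟨U, hU⟩, hj⟩)⟩).symm
  obtain ⟨q0, -⟩ := key ∅ isCompact_empty
  obtain ⟨f, hf⟩ := hs T ⟨q0⟩ ((mk_subtype_le _).trans hS)
  obtain ⟨R, hR, hRe⟩ := core hc hb hs hX e he (fun β => (f β).1.1) (fun β => (f β).1.2.1)
    (fun β => (f β).1.2.2) (fun β => rp (f β).1.1 ⁻¹' (f β).1.2.1) (fun β => rfl) (by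
      intro K hK
      obtain ⟨q, hq⟩ := key K hK
      obtain ⟨β, rfl⟩ := hf q
      exact ⟨β, hq⟩)
  choose G hG1 hG2 using fun β => (f β).2
  refine ⟨G '' R, by rintro _ ⟨β, _, rfl⟩; exact hG1 β, hR.image G, ?_⟩
  rw [eq_univ_iff_forall]
  intro x
  have := hRe ⟨x, rfl⟩
  simp only [mem_iUnion] at this
  obtain ⟨β, hβ, hx⟩ := this
  exact ⟨G β, ⟨β, hβ, rfl⟩, hG2 β hx⟩

theorem exists_embed {Ω : Type u}
    (hs : ∀ T : Type u, Nonempty T → #T ≤ Cardinal.continuum → ∃ f : Ω → T, f.Surjective)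
    {X : Type u} [TopologicalSpace X] [NormalSpace X] [RegularSpace X]
    (hw : WeightLE X Cardinal.continuum) :
    ∃ e : X → (Ω → unitInterval), IsInducing e := by
  obtain ⟨𝓑, h𝓑, hcard⟩ := hw
  let T := {q : 𝓑 × 𝓑 // closure q.1.1 ⊆ q.2.1}
  have hT : #(Option T) ≤ Cardinal.continuum := by
    rw [mk_option]
    have : #T ≤ Cardinal.continuum := by
      refine (mk_subtype_le _).trans ?_
      rw [mk_prod, lift_id]
      calc #𝓑 * #𝓑 ≤ Cardinal.continuum * Cardinal.continuum := by gcongr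
        _ = _ := continuum_mul_self
    exact add_le_of_le aleph0_le_continuum this (one_lt_aleph0.le.trans aleph0_le_continuum)
  obtain ⟨g, hg⟩ := hs (Option T) ⟨none⟩ hT
  have h1 : ∀ o : Option T, ∃ f : X → unitInterval, Continuous f ∧ ∀ q, o = some q →
      (∀ x ∈ q.1.1.1, f x = 0) ∧ ∀ x ∉ q.1.2.1, f x = 1 := by
    rintro (_ | q)
    · exact ⟨fun _ => 0, continuous_const, fun q h => by cases h⟩
    · obtain ⟨f, hf0, hf1, hf⟩ := exists_continuous_zero_one_of_isClosed
        (isClosed_closure (s := q.1.1.1)) (h𝓑.isOpen q.1.2.2).isClosed_compl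
        (disjoint_compl_right_iff_subset.2 q.2)
      refine ⟨fun x => ⟨f x, hf x⟩, by fun_prop, ?_⟩
      rintro _ ⟨rfl⟩
      exact ⟨fun x hx => Subtype.ext (hf0 (subset_closure hx)), fun x hx => Subtype.ext (hf1 hx)⟩
  choose f hfc hf using h1
  refine ⟨fun x β => f (g β) x, ?_⟩
  have hcont : Continuous (fun x (β : Ω) => f (g β) x) := continuous_pi fun β => hfc _
  rw [isInducing_iff_nhds]
  intro x
  refine le_antisymm hcont.continuousAt.le_comap ?_
  intro U hU
  obtain ⟨b2, hb2, hx2, hb2U⟩ := h𝓑.mem_nhds_iff.1 hU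
  obtain ⟨N, hN, hNc, hNb⟩ := exists_mem_nhds_isClosed_subset ((h𝓑.isOpen hb2).mem_nhds hx2)
  obtain ⟨b1, hb1, hx1, hb1N⟩ := h𝓑.mem_nhds_iff.1 hN
  obtain ⟨β, hβ⟩ := hg (some ⟨(⟨b1, hb1⟩, ⟨b2, hb2⟩), (closure_minimal hb1N hNc).trans hNb⟩)
  have h2 := hf _ _ hβ
  refine ⟨{b | b β ≠ 1}, ?_, ?_⟩
  · refine (isOpen_ne_fun (continuous_apply β) continuous_const).mem_nhds ?_
    change f (g β) x ≠ 1
    rw [h2.1 x hx1]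
    exact zero_ne_one
  · intro y hy
    apply hb2U
    by_contra hyb
    exact hy (h2.2 y hyb)

theorem tube_pi {X : Type u} [TopologicalSpace X] (K : ℕ → Set X) (hK : ∀ i, IsCompact (K i))
    (O : Set (ℕ → X)) (hO : IsOpen O) (hKO : Set.univ.pi K ⊆ O) :
    ∃ (n : ℕ) (V : ℕ → Set X), (∀ i, IsOpen (V i) ∧ K i ⊆ V i) ∧ {f | ∀ i < n, f i ∈ V i} ⊆ O := by
  have h1 : O ∈ Filter.pi (fun i => 𝓝ˢ (K i)) := by
    rw [Filter.mem_iff_ultrafilter]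
    intro 𝒰 h𝒰
    have h2 : ∀ i, ∃ x ∈ K i, Filter.Tendsto (fun f : ℕ → X => f i) 𝒰 (𝓝 x) := by
      intro i
      have h3 : Filter.Tendsto (fun f : ℕ → X => f i) 𝒰 (𝓝ˢ (K i)) :=
        (Filter.tendsto_eval_pi _ i).mono_left h𝒰
      by_contra! hcon
      have h4 : ∀ x ∈ K i, ∃ N, IsOpen N ∧ x ∈ N ∧ (fun f : ℕ → X => f i) ⁻¹' N ∉ 𝒰 := by
        intro x hx
        have := hcon x hx
        rw [(nhds_basis_opens x).tendsto_right_iff] at this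
        push Not at this
        obtain ⟨N, ⟨hxN, hN⟩, h⟩ := this
        exact ⟨N, hN, hxN, Ultrafilter.compl_mem_iff_notMem.1 h⟩
      choose! N hN hxN hN𝒰 using h4
      obtain ⟨t, ht, htK⟩ := (hK i).elim_nhds_subcover N (fun x hx => (hN x hx).mem_nhds (hxN x hx))
      have h5 : (⋃ x ∈ t, N x) ∈ 𝓝ˢ (K i) :=
        (isOpen_biUnion fun x hx => hN x (ht x hx)).mem_nhdsSet.2 htK
      have h6 : (fun f : ℕ → X => f i) ⁻¹' (⋃ x ∈ t, N x) ∈ 𝒰 := h3 h5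
      rw [preimage_iUnion₂, ← Finset.set_biUnion_coe, Ultrafilter.finite_biUnion_mem_iff t.finite_toSet] at h6
      obtain ⟨x, hx, hx2⟩ := h6
      exact hN𝒰 x (ht x hx) hx2
    choose f hfK hf using h2
    have h7 : (𝒰 : Filter (ℕ → X)) ≤ 𝓝 f := tendsto_pi_nhds.2 hf
    exact h7 (hO.mem_nhds (hKO fun i _ => hfK i))
  obtain ⟨I, hI, t, ht, hIt⟩ := Filter.mem_pi.1 h1
  obtain ⟨n, hn⟩ := hI.bddAbove
  have h2 : ∀ i, ∃ V, IsOpen V ∧ K i ⊆ V ∧ V ⊆ t i := fun i => mem_nhdsSet_iff_exists.1 (ht i)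
  choose V hV1 hV2 hV3 using h2
  refine ⟨n + 1, V, fun i => ⟨hV1 i, hV2 i⟩, ?_⟩
  intro f hf
  exact hIt fun i hi => hV3 i (hf i (Nat.lt_succ_of_le (hn hi)))

theorem nb_inter {X : Type u} [TopologicalSpace X] {ι : Type*} (J : Set ι) (hJ : J.Countable)
    (K : Set X) (G : ι → Set X) (h : ∀ j ∈ J, nb K (G j)) : nb K (⋂ j ∈ J, G j) := by
  have := hJ.to_subtype
  choose 𝒮 h1 h2 h3 using fun j : J => h j j.2
  refine ⟨⋃ j, 𝒮 j, countable_iUnion h1, ?_, ?_⟩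
  · intro U hU
    obtain ⟨j, hj⟩ := mem_iUnion.1 hU
    exact h2 j U hj
  · refine subset_iInter₂ fun j hj => ?_
    exact (sInter_subset_sInter (subset_iUnion 𝒮 ⟨j, hj⟩)).trans (h3 ⟨j, hj⟩)

theorem power {X : Type u} [TopologicalSpace X] (hA : AlsterSp X) : QuasiLindelofSp (ℕ → X) := by
  intro 𝒰 hU hcov
  let Cov : Set (ℕ → X) → Prop := fun S => ∃ 𝒱 ⊆ 𝒰, 𝒱.Countable ∧ S ⊆ ⋃₀ 𝒱
  suffices h : Cov Set.univ by
    obtain ⟨𝒱, h1, h2, h3⟩ := h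
    exact ⟨𝒱, h1, h2, univ_subset_iff.1 h3⟩
  by_contra hbad0
  let bad : ℕ → (ℕ → Set X) → Prop := fun n K =>
    ∀ H : ℕ → Set X, (∀ i < n, nb (K i) (H i)) → ¬ Cov {f | ∀ i < n, f i ∈ H i}
  have step : ∀ n K, ∃ C, bad n K → IsCompact C ∧ bad (n + 1) (Function.update K n C) := by
    intro n K
    by_cases hbad : bad n K
    swap
    · exact ⟨∅, fun h => absurd h hbad⟩
    by_contra! hcon
    have h1 : ∀ C : {C : Set X // IsCompact C}, ∃ H : ℕ → Set X,
        (∀ i < n + 1, nb (Function.update K n C.1 i) (H i)) ∧ Cov {f | ∀ i < n + 1, f i ∈ H i} := by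
      intro C
      have := (hcon C.1).2 C.2
      simp only [bad] at this
      push Not at this
      exact this
    choose H hH1 hH2 using h1
    obtain ⟨𝒢, h𝒢1, h𝒢2, h𝒢3⟩ := hA (range fun C => H C n) (by
      intro C hC
      refine ⟨_, ⟨⟨C, hC⟩, rfl⟩, ?_⟩
      have := hH1 ⟨C, hC⟩ n (Nat.lt_succ_self n)
      simpa using this)
    have := h𝒢2.to_subtype
    choose c hc using fun G : 𝒢 => h𝒢1 G.2
    refine hbad (fun i => ⋂ C ∈ range c, H C i) ?_ ?_
    · intro i hi
      refine nb_inter _ (countable_range c) _ _ fun C _ => ?_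
      have := hH1 C i (hi.trans (Nat.lt_succ_self n))
      rwa [Function.update_of_ne hi.ne] at this
    · choose 𝒱 hv1 hv2 hv3 using fun G : 𝒢 => hH2 (c G)
      refine ⟨⋃ G, 𝒱 G, iUnion_subset hv1, countable_iUnion hv2, ?_⟩
      intro f hf
      have hfn : f n ∈ ⋃₀ 𝒢 := by rw [h𝒢3]; trivial
      obtain ⟨G, hG, hfG⟩ := hfn
      refine sUnion_subset_sUnion (subset_iUnion 𝒱 ⟨G, hG⟩) (hv3 ⟨G, hG⟩ ?_)
      intro i hi
      rcases Nat.lt_succ_iff_lt_or_eq.1 hi with hi | rfl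
      · exact mem_iInter₂.1 (hf i hi) _ ⟨_, rfl⟩
      · have := hc ⟨G, hG⟩
        dsimp only at this
        rw [this]; exact hfG
  choose nx hnx using step
  let σ : ℕ → (ℕ → Set X) := fun n =>
    Nat.rec (fun _ => ∅) (fun n K => Function.update K n (nx n K)) n
  have hσs : ∀ n, σ (n + 1) = Function.update (σ n) n (nx n (σ n)) := fun n => rfl
  have hσb : ∀ n, bad n (σ n) := by
    intro n
    induction n with
    | zero =>
      intro H _ hC
      apply hbad0
      simpa using hC
    | succ n ih => rw [hσs]; exact (hnx n _ ih).2
  let K : ℕ → Set X := fun i => σ (i + 1) i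
  have hKc : ∀ i, IsCompact (K i) := by
    intro i
    simp only [K, hσs, Function.update_self]
    exact (hnx i _ (hσb i)).1
  have hKσ : ∀ i n, i + 1 ≤ n → σ n i = K i := by
    intro i n hin
    induction n, hin using Nat.le_induction with
    | base => rfl
    | succ n hn ih => rw [hσs, Function.update_of_ne (by omega), ih]
  have hcpt : IsCompact (Set.univ.pi K) := isCompact_univ_pi hKc
  obtain ⟨t, ht1, ht2, ht3⟩ := hcpt.elim_finite_subcover_image (b := 𝒰) (c := id) hU (by
    intro f _
    have : f ∈ ⋃₀ 𝒰 := by rw [hcov]; trivial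
    rwa [sUnion_eq_biUnion] at this)
  obtain ⟨n, V, hV, hVO⟩ := tube_pi K hKc (⋃ i ∈ t, id i)
    (isOpen_biUnion fun i hi => hU i (ht1 hi)) ht3
  refine hσb n V ?_ ⟨t, ht1, ht2.countable, ?_⟩
  · intro i hi
    rw [hKσ i n hi]
    exact ⟨{V i}, countable_singleton _, by rintro _ rfl; exact hV i, by simp⟩
  · rw [sUnion_eq_biUnion]; exact hVO

theorem final (hCH : Cardinal.continuum.{u} = Cardinal.aleph 1)
    (X : Type u) [TopologicalSpace X]
    (hprod : ProductivelyLindelofSp X) (hw : WeightLE X Cardinal.continuum) :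
    PowerfullyLindelofSp X := by
  have hP : EngLindelofSp PUnit.{u+1} := ⟨inferInstance, inferInstance,
    (quasi_iff _).2 inferInstance⟩
  obtain ⟨h1, h2, h3⟩ := hprod PUnit.{u+1} hP
  have hreg : RegularSpace X := (Homeomorph.prodPUnit X).symm.isEmbedding.isInducing.regularSpace
  have hT1 : T1Space X := (Homeomorph.prodPUnit X).symm.isEmbedding.t1Space
  have hL : LindelofSpace X := by
    have := (quasi_iff _).1 h3
    have h4 := (isLindelof_univ (X := X × PUnit.{u+1})).image (Homeomorph.prodPUnit X).continuous
    rw [image_univ, (Homeomorph.prodPUnit X).surjective.range_eq] at h4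
    exact ⟨h4⟩
  have hN : NormalSpace X := inferInstance
  let Ω := (Cardinal.aleph.{u} 1).ord.ToType
  have hΩ : #Ω = Cardinal.aleph 1 := by simp [Ω]
  have hc : ∀ a : Ω, (Iio a).Countable := fun a => by
    rw [Cardinal.countable_iff_lt_aleph_one]; exact mk_Iio_toType_ord_lt a
  have hb : ∀ S : Set Ω, S.Countable → ∃ b, ∀ s ∈ S, s < b := by
    intro S hS
    by_contra! hcon
    have h5 : (⋃ s ∈ S, insert s (Iio s)).Countable := hS.biUnion fun s _ => (hc s).insert s
    have h6 : (⋃ s ∈ S, insert s (Iio s)) = (Set.univ : Set Ω) := by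
      rw [eq_univ_iff_forall]
      intro b
      obtain ⟨s, hs, hbs⟩ := hcon b
      refine mem_biUnion hs ?_
      rcases hbs.eq_or_lt with h | h
      · exact Or.inl h
      · exact Or.inr h
    rw [h6, Cardinal.countable_iff_lt_aleph_one, mk_univ, hΩ] at h5
    exact lt_irrefl _ h5
  have hs : ∀ T : Type u, Nonempty T → #T ≤ Cardinal.continuum →
      ∃ f : Ω → T, f.Surjective := by
    intro T hT hTc
    rw [hCH, ← hΩ] at hTc
    obtain ⟨g⟩ := hTc
    exact ⟨Function.invFun g, Function.invFun_surjective g.injective⟩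
  obtain ⟨e, he⟩ := exists_embed hs hw
  exact ⟨inferInstance, inferInstance, power (alster hc hb hs (hΩ.trans hCH.symm).le hprod e he)⟩

/-- Under CH, every productively Lindelöf space of weight at most 𝔠
is powerfully Lindelöf. -/
theorem stmt1 (hCH : Cardinal.continuum = Cardinal.aleph 1)
    (X : Type u) [TopologicalSpace X]
    (hprod : ProductivelyLindelofSp X) (hw : WeightLE X Cardinal.continuum) :
    PowerfullyLindelofSp X := by
  refine final ?_ X hprod hw
  have h := congrArg Cardinal.lift.{u} hCH
  rw [lift_continuum, lift_aleph] at h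
  apply Cardinal.lift_injective
  rw [lift_continuum, lift_aleph]
  simpa using h
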